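/- arXiv:1012.1103 — 2 statements merged into one kernel-verified Lean document; each statement's English description precedes it below -/
import Mathlib

section
/- Let (X,T) be a topological dynamical system in which X is zero-dimensional. Then for every analytic subset Z ⊆ X, the Bowen topological entropy of Z equals the supremum of the Bowen topological entropies of its compact subsets: h^B_top(T,Z) = sup { h^B_top(T,K) : K ⊆ Z, K compact }. -/
/-!
Fix an entourage `V` that is an equivalence relation. Two of its dynamical cells
`{y | ∀ k < n, (T^k x, T^k y) ∈ V}` are nested as soon as they meet. Given two covers by such cells,
the cells of their union that are not maximal, together with the cells common to both covers, still
cover every point that both of them cover. This is a form of strong subadditivity: near-optimal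
covers of an increasing sequence of arbitrary sets can be merged with controlled total error, so the
content defined by covers with cells of level at least `N` is continuous along increasing sequences.
Since cells are open, the content is also outer regular, hence a Choquet capacity, and an analytic
set of positive content contains a compact set of positive content. It matters that `N` is kept
fixed: the limit over `N` need not be a capacity.

Sandwiching `V` between metric entourages of radii `δ` and `ε` compares this content with
`M^s_{N,δ}` and `M^s_{N,ε}`. Finally `M^s_{N,δ}(K) > 0` for a single `N` forces `M^t(K) = ∞` for all
`t < s`: a cover by Bowen balls of levels at least `n` has a sum for `t` at least `exp ((s - t) n)`
times its sum for `s`.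
-/

open Filter Set MeasureTheory Topology
open scoped ENNReal NNReal

section Core

variable {X : Type*} [MetricSpace X]

/-- The open Bowen ball `B_n(x, ε)` = `{y : d_n(x,y) < ε}` where
`d_n(x,y) = max_{0 ≤ k ≤ n-1} d(T^k x, T^k y)` is the `n`-th Bowen metric. -/
def bowenBall (T : X → X) (x : X) (n : ℕ) (ε : ℝ) : Set X :=
  {y | ∀ k < n, dist (T^[k] x) (T^[k] y) < ε}

/-- The closed Bowen ball `B̄_n(x, ε)` = `{y : d_n(x,y) ≤ ε}`. -/
def bowenClosedBall (T : X → X) (x : X) (n : ℕ) (ε : ℝ) : Set X :=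
  {y | ∀ k < n, dist (T^[k] x) (T^[k] y) ≤ ε}

/-- `M^s_{N,ε}(Z)`: infimum of `Σ_i exp (- s n_i)` over finite or countable families
of open Bowen balls `{B_{n_i}(x_i, ε)}` with `n_i ≥ N` covering `Z`. -/
noncomputable def Mpre (T : X → X) (s : ℝ) (N : ℕ) (ε : ℝ) (Z : Set X) : ℝ≥0∞ :=
  ⨅ (I : Set ℕ) (x : ℕ → X) (n : ℕ → ℕ) (_ : ∀ i ∈ I, N ≤ n i)
    (_ : Z ⊆ ⋃ i ∈ I, bowenBall T (x i) (n i) ε),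
    ∑' i : I, ENNReal.ofReal (Real.exp (-s * n i))

/-- `M^s_ε(Z) = lim_{N → ∞} M^s_{N,ε}(Z)` (the quantity is nondecreasing in `N`). -/
noncomputable def MpreEps (T : X → X) (s : ℝ) (ε : ℝ) (Z : Set X) : ℝ≥0∞ :=
  ⨆ N : ℕ, Mpre T s N ε Z

/-- `M^s(Z) = lim_{ε → 0} M^s_ε(Z)` (the quantity is nondecreasing as `ε` decreases). -/
noncomputable def Mtop (T : X → X) (s : ℝ) (Z : Set X) : ℝ≥0∞ :=
  ⨆ (ε : ℝ) (_ : 0 < ε), MpreEps T s ε Z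

/-- Bowen's topological entropy `h^B_top(T,Z)`: the critical value of `s` at which
`M^s(Z)` jumps from `∞` to `0`. -/
noncomputable def bowenEntropy (T : X → X) (Z : Set X) : ℝ≥0∞ :=
  ⨆ (s : ℝ) (_ : Mtop T s Z = ∞), ENNReal.ofReal s

/-- `P^s_{N,ε}(Z)`: suprema of `Σ_i exp (- s n_i)` over finite or countable pairwise
disjoint families of closed Bowen balls `{B̄_{n_i}(x_i, ε)}` with `x_i ∈ Z`, `n_i ≥ N`. -/
noncomputable def Ppre (T : X → X) (s : ℝ) (N : ℕ) (ε : ℝ) (Z : Set X) : ℝ≥0∞ :=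
  ⨆ (I : Set ℕ) (x : ℕ → X) (n : ℕ → ℕ) (_ : ∀ i ∈ I, x i ∈ Z ∧ N ≤ n i)
    (_ : ∀ i ∈ I, ∀ j ∈ I, i ≠ j →
      Disjoint (bowenClosedBall T (x i) (n i) ε) (bowenClosedBall T (x j) (n j) ε)),
    ∑' i : I, ENNReal.ofReal (Real.exp (-s * n i))

/-- `P^s_ε(Z) = lim_{N → ∞} P^s_{N,ε}(Z)` (the quantity is nonincreasing in `N`). -/
noncomputable def PpreEps (T : X → X) (s : ℝ) (ε : ℝ) (Z : Set X) : ℝ≥0∞ :=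
  ⨅ N : ℕ, Ppre T s N ε Z

/-- `P^s_ε(Z) = inf { Σ_{i} P^s_ε(Z_i) : ⋃_i Z_i ⊇ Z }`. -/
noncomputable def Pouter (T : X → X) (s : ℝ) (ε : ℝ) (Z : Set X) : ℝ≥0∞ :=
  ⨅ (Zs : ℕ → Set X) (_ : Z ⊆ ⋃ i, Zs i), ∑' i, PpreEps T s ε (Zs i)

/-- `h^P_top(T,Z,ε)`: the critical value of `s` at which `P^s_ε(Z)` jumps from `∞` to `0`. -/
noncomputable def packEntropyEps (T : X → X) (ε : ℝ) (Z : Set X) : ℝ≥0∞ :=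
  ⨆ (s : ℝ) (_ : Pouter T s ε Z = ∞), ENNReal.ofReal s

/-- The packing topological entropy `h^P_top(T,Z) = lim_{ε → 0} h^P_top(T,Z,ε)`
(the quantity is nondecreasing as `ε` decreases). -/
noncomputable def packEntropy (T : X → X) (Z : Set X) : ℝ≥0∞ :=
  ⨆ (ε : ℝ) (_ : 0 < ε), packEntropyEps T ε Z

/-- `r_n(Z,ε)`: the largest cardinality of an `(n,ε)`-separated subset of `Z`,
i.e. a set in which distinct points `x, y` satisfy `d_n(x,y) > ε`. -/
noncomputable def maxSep (T : X → X) (Z : Set X) (n : ℕ) (ε : ℝ) : ℝ≥0∞ :=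
  ⨆ (E : Finset X) (_ : ↑E ⊆ Z ∧
    ∀ x ∈ E, ∀ y ∈ E, x ≠ y → ∃ k < n, ε < dist (T^[k] x) (T^[k] y)),
    (E.card : ℝ≥0∞)

/-- Logarithm on `ℝ≥0∞` (with `elog ∞ = ∞`), used for counting quantities. -/
noncomputable def elog (x : ℝ≥0∞) : ℝ≥0∞ :=
  if x = ∞ then ∞ else ENNReal.ofReal (Real.log x.toReal)

/-- The upper capacity topological entropy
`h^{UC}_top(T,Z) = lim_{ε → 0} limsup_{n → ∞} (1/n) log r_n(Z,ε)`. -/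
noncomputable def upcapEntropy (T : X → X) (Z : Set X) : ℝ≥0∞ :=
  ⨆ (ε : ℝ) (_ : 0 < ε), Filter.limsup (fun n : ℕ => elog (maxSep T Z n ε) / n) Filter.atTop

/-- `- log x` as a function `ℝ≥0∞ → ℝ≥0∞` (with `negLog 0 = ∞`), used for measures of balls. -/
noncomputable def negLog (x : ℝ≥0∞) : ℝ≥0∞ :=
  if x = 0 then ∞ else ENNReal.ofReal (-Real.log x.toReal)

variable [MeasurableSpace X]

/-- The lower local entropy `h̲_μ(T,x) = lim_{ε→0} liminf_{n→∞} -(1/n) log μ(B_n(x,ε))`. -/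
noncomputable def lowerLocalEntropy (T : X → X) (μ : Measure X) (x : X) : ℝ≥0∞ :=
  ⨆ (ε : ℝ) (_ : 0 < ε),
    Filter.liminf (fun n : ℕ => negLog (μ (bowenBall T x n ε)) / n) Filter.atTop

/-- The upper local entropy `h̄_μ(T,x) = lim_{ε→0} limsup_{n→∞} -(1/n) log μ(B_n(x,ε))`. -/
noncomputable def upperLocalEntropy (T : X → X) (μ : Measure X) (x : X) : ℝ≥0∞ :=
  ⨆ (ε : ℝ) (_ : 0 < ε),
    Filter.limsup (fun n : ℕ => negLog (μ (bowenBall T x n ε)) / n) Filter.atTop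

/-- The measure-theoretical lower entropy `h̲_μ(T) = ∫ h̲_μ(T,x) dμ(x)`. -/
noncomputable def lowerEntropy (T : X → X) (μ : Measure X) : ℝ≥0∞ :=
  ∫⁻ x, lowerLocalEntropy T μ x ∂μ

/-- The measure-theoretical upper entropy `h̄_μ(T) = ∫ h̄_μ(T,x) dμ(x)`. -/
noncomputable def upperEntropy (T : X → X) (μ : Measure X) : ℝ≥0∞ :=
  ∫⁻ x, upperLocalEntropy T μ x ∂μ

end Core

section Capacity

lemma exists_finset_forall_mem_of_isCompact_subset_isOpen {ι : Type*} {Y : ι → Type*}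
    [∀ i, TopologicalSpace (Y i)] {K U : Set (∀ i, Y i)} (hK : IsCompact K) (hU : IsOpen U)
    (hKU : K ⊆ U) : ∃ I : Finset ι, ∀ x ∈ K, ∀ y : ∀ i, Y i, (∀ i ∈ I, y i = x i) → y ∈ U := by
  classical
  refine hK.induction_on (p := fun L => ∃ I : Finset ι, ∀ x ∈ L, ∀ y : ∀ i, Y i,
    (∀ i ∈ I, y i = x i) → y ∈ U) ⟨∅, by simp⟩ ?_ ?_ fun x hx => ?_
  · rintro L M hLM ⟨I, hI⟩
    exact ⟨I, fun x hx y hy => hI x (hLM hx) y hy⟩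
  · rintro L M ⟨I, hI⟩ ⟨I', hI'⟩
    refine ⟨I ∪ I', fun x hx y hy => hx.elim (fun hx => hI x hx y fun i hi => hy i ?_)
      fun hx => hI' x hx y fun i hi => hy i ?_⟩ <;> simp [hi]
  · obtain ⟨I, t, ht, htU⟩ := isOpen_pi_iff.1 hU x (hKU hx)
    refine ⟨(I : Set ι).pi t, mem_nhdsWithin_of_mem_nhds ?_, I, fun x' hx' y hy =>
      htU fun i hi => hy i hi ▸ hx' i hi⟩
    exact set_pi_mem_nhds I.finite_toSet fun i hi => (ht i hi).1.mem_nhds (ht i hi).2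

lemma exists_finset_pi_subset_of_isOpen {ι : Type*} {Y : ι → Type*} [∀ i, TopologicalSpace (Y i)]
    {s : ∀ i, Set (Y i)} (hs : ∀ i, IsCompact (s i)) {U : Set (∀ i, Y i)} (hU : IsOpen U)
    (hsU : univ.pi s ⊆ U) : ∃ I : Finset ι, (I : Set ι).pi s ⊆ U := by
  classical
  obtain hempty | ⟨z, hz⟩ := (univ.pi s).eq_empty_or_nonempty
  · obtain ⟨i, hi⟩ := univ_pi_eq_empty_iff.1 hempty
    exact ⟨{i}, by simp [hi]⟩
  obtain ⟨I, hI⟩ := exists_finset_forall_mem_of_isCompact_subset_isOpen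
    (isCompact_univ_pi hs) hU hsU
  refine ⟨I, fun y hy => hI (fun i => if i ∈ I then y i else z i) (fun i _ => ?_) y
    fun i hi => (if_pos hi).symm⟩
  by_cases hi : i ∈ I
  · simpa [hi] using hy i hi
  · simpa [hi] using hz i trivial

variable {X α : Type*} [TopologicalSpace X] [CompleteLinearOrder α]

/-- A Choquet capacity on `X`, with values in a complete linear order: a monotone set function
that is continuous along increasing sequences of arbitrary sets and is determined on compact sets
by its values on open sets. The converse inequalities in the two continuity conditions follow
from monotonicity. -/
structure IsCapacity (c : Set X → α) : Prop where
  mono : Monotone c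
  iUnion_le : ∀ E : ℕ → Set X, Monotone E → c (⋃ n, E n) ≤ ⨆ n, c (E n)
  iInf_isOpen_le : ∀ K, IsCompact K → ⨅ (U) (_ : IsOpen U) (_ : K ⊆ U), c U ≤ c K

namespace IsCapacity

variable {c : Set X → α} {t : α}

lemma exists_lt_image_inter_le (hc : IsCapacity c) (f : (ℕ → ℕ) → X) {S : Set (ℕ → ℕ)}
    (ht : t < c (f '' S)) (k : ℕ) : ∃ m, t < c (f '' (S ∩ {σ | σ k ≤ m})) := by
  have hS : f '' S = ⋃ m, f '' (S ∩ {σ | σ k ≤ m}) := by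
    rw [← image_iUnion, ← inter_iUnion, iUnion_eq_univ_iff.2 fun σ => ⟨σ k, le_refl (σ k)⟩,
      inter_univ]
  have hmono : Monotone fun m => f '' (S ∩ {σ | σ k ≤ m}) := fun m n hmn =>
    image_mono (inter_subset_inter_right S fun σ (hσ : σ k ≤ m) => hσ.trans hmn)
  rw [hS] at ht
  exact lt_iSup_iff.1 (ht.trans_le (hc.iUnion_le _ hmono))

lemma exists_forall_lt_image_pi_Iic (hc : IsCapacity c) (f : (ℕ → ℕ) → X)
    (ht : t < c (range f)) : ∃ b : ℕ → ℕ, ∀ k, t < c (f '' (Iio k).pi fun i => Iic (b i)) := by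
  choose m hm using fun (S : {S // t < c (f '' S)}) => hc.exists_lt_image_inter_le f S.2
  let S : ℕ → {S // t < c (f '' S)} := fun k =>
    k.rec ⟨univ, by rwa [image_univ]⟩ fun k S => ⟨_, hm S k⟩
  have hS (k : ℕ) : (S k).1 = (Iio k).pi fun i => Iic (m (S i) i) := by
    induction k with
    | zero => simp [S]
    | succ k ih =>
      rw [← Order.succ_eq_add_one, Order.Iio_succ_eq_insert, insert_pi, inter_comm, ← ih]
      rfl
  exact ⟨fun i => m (S i) i, fun k => hS k ▸ (S k).2⟩

/-- Choquet's capacitability theorem. -/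
theorem exists_isCompact_le (hc : IsCapacity c) {Z : Set X} (hZ : AnalyticSet Z) (ht : t < c Z) :
    ∃ K ⊆ Z, IsCompact K ∧ t ≤ c K := by
  rw [AnalyticSet] at hZ
  obtain rfl | ⟨f, hf, rfl⟩ := hZ
  · exact ⟨∅, Subset.rfl, isCompact_empty, ht.le⟩
  obtain ⟨b, hb⟩ := hc.exists_forall_lt_image_pi_Iic f ht
  have hbox (i : ℕ) : IsCompact (Iic (b i)) := (finite_Iic (b i)).isCompact
  have hK : IsCompact (f '' univ.pi fun i => Iic (b i)) := (isCompact_univ_pi hbox).image hf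
  refine ⟨_, image_subset_range f _, hK, le_trans ?_ (hc.iInf_isOpen_le _ hK)⟩
  refine le_iInf fun U => le_iInf fun hU => le_iInf fun hKU => ?_
  obtain ⟨I, hI⟩ := exists_finset_pi_subset_of_isOpen hbox (hU.preimage hf)
    (image_subset_iff.1 hKU)
  obtain ⟨k, hk⟩ := I.exists_nat_subset_range
  have hsub : f '' (Iio k).pi (fun i => Iic (b i)) ⊆ U :=
    image_subset_iff.2 ((pi_mono' (fun _ _ => Subset.rfl)
      fun i hi => Finset.mem_range.1 (hk hi)).trans hI)
  exact (hb k).le.trans (hc.mono hsub)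

end IsCapacity

end Capacity

section CoverContent

variable {X J : Type*} {C : J → Set X} {w : J → ℝ≥0∞} {E : Set X}

/-- The content of `E` for covers by members of the family `C`, the set `C j` having weight `w j`.
Uncountable covers are allowed; the members of positive weight are countable in number as soon as
the total weight is finite. -/
noncomputable def coverContent (C : J → Set X) (w : J → ℝ≥0∞) (E : Set X) : ℝ≥0∞ :=
  ⨅ (A : Set J) (_ : E ⊆ ⋃ j ∈ A, C j), ∑' j : A, w j

lemma coverContent_le_tsum {A : Set J} (hA : E ⊆ ⋃ j ∈ A, C j) :
    coverContent C w E ≤ ∑' j : A, w j :=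
  iInf₂_le A hA

lemma coverContent_mono : Monotone (coverContent C w) := fun _ _ hEF =>
  le_iInf₂ fun _ hA => coverContent_le_tsum (hEF.trans hA)

lemma exists_cover_tsum_le_coverContent_add (hE : coverContent C w E ≠ ∞) {ε : ℝ≥0∞} (hε : ε ≠ 0) :
    ∃ A : Set J, E ⊆ ⋃ j ∈ A, C j ∧ ∑' j : A, w j ≤ coverContent C w E + ε := by
  have hlt : ⨅ (A : Set J) (_ : E ⊆ ⋃ j ∈ A, C j), ∑' j : A, w j < coverContent C w E + ε :=
    ENNReal.lt_add_right hE hε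
  simp only [iInf_lt_iff] at hlt
  obtain ⟨A, hA, hAw⟩ := hlt
  exact ⟨A, hA, hAw.le⟩

lemma iInf_isOpen_coverContent_le [TopologicalSpace X] (hC : ∀ j, IsOpen (C j)) (E : Set X) :
    ⨅ (U) (_ : IsOpen U) (_ : E ⊆ U), coverContent C w U ≤ coverContent C w E := by
  refine le_iInf₂ fun A hA => ?_
  refine iInf_le_of_le (⋃ j ∈ A, C j) (iInf₂_le_of_le (isOpen_biUnion fun j _ => hC j) hA ?_)
  exact coverContent_le_tsum Subset.rfl

variable [PartialOrder J]

/-- A net in the sense of Rogers' net measures: a family of sets two of which are nested as soon as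
they meet. The order on the indices tells which one is larger: larger sets have smaller indices. -/
structure IsNet (C : J → Set X) : Prop where
  antitone : Antitone C
  le_or_le : ∀ ⦃i j x⦄, x ∈ C i → x ∈ C j → i ≤ j ∨ j ≤ i

/-- The minimal elements of a set of indices. For a net they index the maximal sets of the
subfamily. -/
def minimalElements (A : Set J) : Set J := {j | Minimal (· ∈ A) j}

lemma minimalElements_subset (A : Set J) : minimalElements A ⊆ A := fun _ hj => hj.prop

lemma minimalElements_inter_subset {A B : Set J} (hBA : B ⊆ A) :
    minimalElements A ∩ B ⊆ minimalElements B := fun _ hj =>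
  hj.1.mono (fun _ hi => hBA hi) hj.2

lemma minimalElements_union_subset (A B : Set J) :
    minimalElements (A ∪ B) ⊆ minimalElements (minimalElements A ∪ B) := by
  intro j hj
  have hsub : minimalElements A ∪ B ⊆ A ∪ B := union_subset_union_left B (minimalElements_subset A)
  refine minimalElements_inter_subset hsub ⟨hj, hj.prop.imp_left fun hjA => ?_⟩
  exact minimalElements_inter_subset subset_union_left ⟨hj, hjA⟩

/-- A finite set of minimal elements of the union already lies in one of the `U k`, where its
members are still minimal. -/
lemma tsum_minimalElements_iUnion_le {U : ℕ → Set J} (hU : Monotone U) (w : J → ℝ≥0∞) :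
    ∑' j : minimalElements (⋃ k, U k), w j ≤ ⨆ k, ∑' j : minimalElements (U k), w j := by
  rw [ENNReal.tsum_eq_iSup_sum]
  refine iSup_le fun F => ?_
  set G : Finset J := F.map (Function.Embedding.subtype _) with hG
  have hGmin : (G : Set J) ⊆ minimalElements (⋃ k, U k) := by
    intro j hj
    obtain ⟨i, -, rfl⟩ := Finset.mem_map.1 hj
    exact i.2
  obtain ⟨k, hk⟩ := hU.directed_le.exists_mem_subset_of_finset_subset_biUnion
    (hGmin.trans (minimalElements_subset _))
  have hGk : (G : Set J) ⊆ minimalElements (U k) := fun j hj =>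
    minimalElements_inter_subset (subset_iUnion U k) ⟨hGmin hj, hk hj⟩
  calc ∑ j ∈ F, w j = ∑ j ∈ G, w j := by simp [hG]
    _ = ∑' j : (G : Set J), w j := (Finset.tsum_subtype' G w).symm
    _ ≤ ∑' j : minimalElements (U k), w j := ENNReal.tsum_mono_subtype w hGk
    _ ≤ ⨆ k, ∑' j : minimalElements (U k), w j :=
        le_iSup (fun k => ∑' j : minimalElements (U k), w j) k

namespace IsNet

lemma biUnion_subset_biUnion_minimalElements [WellFoundedLT J] (hC : IsNet C) (A : Set J) :
    ⋃ j ∈ A, C j ⊆ ⋃ j ∈ minimalElements A, C j := by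
  refine iUnion₂_subset fun j hj => ?_
  obtain ⟨i, hij, hi⟩ := exists_minimal_le_of_wellFoundedLT (· ∈ A) j hj
  exact (hC.antitone hij).trans (subset_biUnion_of_mem (u := C) hi)

/-- Strong subadditivity. The members of `A ∪ B` that are not maximal, together with the common
members of `A` and `B`, still cover `E`, because a point of `E` lies in a member of `A` and in a
member of `B`, which are nested. -/
lemma tsum_minimalElements_union_add_coverContent_le (hC : IsNet C) {A B : Set J}
    (hA : E ⊆ ⋃ j ∈ A, C j) (hB : E ⊆ ⋃ j ∈ B, C j) :
    ∑' j : minimalElements (A ∪ B), w j + coverContent C w E ≤ ∑' j : A, w j + ∑' j : B, w j := by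
  set M := minimalElements (A ∪ B)
  have hMAB : M ⊆ A ∪ B := minimalElements_subset (A ∪ B)
  have hcov : E ⊆ ⋃ j ∈ (A ∪ B) \ M ∪ A ∩ B, C j := by
    intro x hx
    obtain ⟨i, hi, hxi⟩ := mem_iUnion₂.1 (hA hx)
    obtain ⟨j, hj, hxj⟩ := mem_iUnion₂.1 (hB hx)
    refine mem_iUnion₂.2 ?_
    obtain rfl | hij := eq_or_ne i j
    · exact ⟨i, Or.inr ⟨hi, hj⟩, hxi⟩
    obtain hle | hle := hC.le_or_le hxi hxj
    · exact ⟨j, Or.inl ⟨Or.inr hj, fun hm => hij (hm.eq_of_le (Or.inl hi) hle)⟩, hxj⟩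
    · exact ⟨i, Or.inl ⟨Or.inl hi, fun hm => hij (hm.eq_of_le (Or.inr hj) hle).symm⟩, hxi⟩
  calc ∑' j : M, w j + coverContent C w E
      ≤ ∑' j : M, w j + (∑' j : ↥((A ∪ B) \ M), w j + ∑' j : ↥(A ∩ B), w j) := by
        grw [coverContent_le_tsum hcov, ENNReal.tsum_union_le]
    _ = ∑' j : ↥(A ∪ B), w j + ∑' j : ↥(A ∩ B), w j := by
        rw [← add_assoc, ← ENNReal.summable.tsum_union_disjoint disjoint_sdiff_right
          ENNReal.summable, union_sdiff_cancel hMAB]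
    _ = ∑' j : A, w j + ∑' j : B, w j := by
        simp only [tsum_subtype, ← ENNReal.tsum_add]
        exact tsum_congr fun j => congrFun (indicator_union_add_inter w A B) j

lemma tsum_minimalElements_accumulate_le [WellFoundedLT J] (hC : IsNet C) {E : ℕ → Set X}
    (hE : Monotone E) (hfin : ∀ k, coverContent C w (E k) ≠ ∞) {A : ℕ → Set J}
    (hA : ∀ k, E k ⊆ ⋃ j ∈ A k, C j) {e : ℕ → ℝ≥0∞}
    (hAe : ∀ k, ∑' j : A k, w j ≤ coverContent C w (E k) + e k) (k : ℕ) :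
    ∑' j : minimalElements (accumulate A k), w j ≤
      coverContent C w (E k) + ∑ i ∈ Finset.range (k + 1), e i := by
  induction k with
  | zero =>
    rw [accumulate_zero_nat, zero_add, Finset.sum_range_one]
    exact (ENNReal.tsum_mono_subtype w (minimalElements_subset _)).trans (hAe 0)
  | succ k ih =>
    set M := minimalElements (accumulate A k)
    have hcov : E k ⊆ ⋃ j ∈ M, C j :=
      ((hA k).trans (biUnion_subset_biUnion_left (subset_accumulate (s := A)))).trans
        (hC.biUnion_subset_biUnion_minimalElements _)
    have hcov' : E k ⊆ ⋃ j ∈ A (k + 1), C j := (hE k.le_succ).trans (hA (k + 1))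
    refine (ENNReal.add_le_add_iff_right (hfin k)).1 ?_
    calc ∑' j : minimalElements (accumulate A (k + 1)), w j + coverContent C w (E k)
        ≤ ∑' j : minimalElements (M ∪ A (k + 1)), w j + coverContent C w (E k) := by
          gcongr
          rw [accumulate_succ]
          exact ENNReal.tsum_mono_subtype w (minimalElements_union_subset _ _)
      _ ≤ ∑' j : M, w j + ∑' j : A (k + 1), w j :=
          hC.tsum_minimalElements_union_add_coverContent_le hcov hcov'
      _ ≤ coverContent C w (E k) + ∑ i ∈ Finset.range (k + 1), e i +
            (coverContent C w (E (k + 1)) + e (k + 1)) := add_le_add ih (hAe (k + 1))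
      _ = coverContent C w (E (k + 1)) + ∑ i ∈ Finset.range (k + 1 + 1), e i +
            coverContent C w (E k) := by rw [Finset.sum_range_succ _ (k + 1)]; ring

lemma coverContent_iUnion_le [WellFoundedLT J] (hC : IsNet C) {E : ℕ → Set X} (hE : Monotone E) :
    coverContent C w (⋃ k, E k) ≤ ⨆ k, coverContent C w (E k) := by
  by_cases htop : ⨆ k, coverContent C w (E k) = ∞
  · exact htop ▸ le_top
  have hfin (k : ℕ) : coverContent C w (E k) ≠ ∞ :=
    ne_top_of_le_ne_top htop (le_iSup (fun k => coverContent C w (E k)) k)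
  refine ENNReal.le_of_forall_pos_le_add fun ε hε _ => ?_
  obtain ⟨e, he_pos, he_sum⟩ := ENNReal.exists_pos_sum_of_countable'
    (ENNReal.coe_pos.2 hε).ne' ℕ
  choose A hA hAe using fun k => exists_cover_tsum_le_coverContent_add (hfin k) (he_pos k).ne'
  have hcov : ⋃ k, E k ⊆ ⋃ j ∈ minimalElements (⋃ k, accumulate A k), C j := by
    refine (iUnion_subset fun k => (hA k).trans (biUnion_subset_biUnion_left ?_)).trans
      (hC.biUnion_subset_biUnion_minimalElements _)
    exact subset_accumulate.trans (subset_iUnion _ k)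
  calc coverContent C w (⋃ k, E k)
      ≤ ∑' j : minimalElements (⋃ k, accumulate A k), w j := coverContent_le_tsum hcov
    _ ≤ ⨆ k, ∑' j : minimalElements (accumulate A k), w j :=
        tsum_minimalElements_iUnion_le monotone_accumulate w
    _ ≤ (⨆ k, coverContent C w (E k)) + ε := iSup_le fun k =>
        (hC.tsum_minimalElements_accumulate_le hE hfin hA hAe k).trans <| add_le_add
          (le_iSup (fun k => coverContent C w (E k)) k) ((ENNReal.sum_le_tsum _).trans he_sum.le)

theorem isCapacity_coverContent [TopologicalSpace X] [WellFoundedLT J] (hC : IsNet C)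
    (hopen : ∀ j, IsOpen (C j)) (w : J → ℝ≥0∞) : IsCapacity (coverContent C w) where
  mono := coverContent_mono
  iUnion_le _ := hC.coverContent_iUnion_le
  iInf_isOpen_le K _ := iInf_isOpen_coverContent_le hopen K

end IsNet

end CoverContent

section LevelCell

variable {X : Type*} {R : ℕ → SetRel X X} {N : ℕ}

/-- The classes `R n [x]` of level `n ≥ N` of a sequence `R` of equivalence relations. A class is
recorded together with its level, since one set may be a class of several levels. The order
compares the levels, and the classes by reverse inclusion. -/
abbrev LevelCell (R : ℕ → SetRel X X) (N : ℕ) : Type _ :=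
  {p : ℕ × (Set X)ᵒᵈ // N ≤ p.1 ∧ ∃ x, UniformSpace.ball x (R p.1) = OrderDual.ofDual p.2}

namespace LevelCell

/-- The level is part of the index: it is not determined by the class. -/
def level (p : LevelCell R N) : ℕ := p.1.1

/-- The class itself, outside the reversed order that it carries in the index. -/
def toSet (p : LevelCell R N) : Set X := OrderDual.ofDual p.1.2

/-- The class of `x` at level `n`. -/
def of (R : ℕ → SetRel X X) (x : X) {n : ℕ} (hn : N ≤ n) : LevelCell R N :=
  ⟨(n, OrderDual.toDual (UniformSpace.ball x (R n))), hn, x, rfl⟩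

lemma exists_ball_eq (p : LevelCell R N) : ∃ x, UniformSpace.ball x (R p.level) = p.toSet := p.2.2

lemma le_iff {p q : LevelCell R N} : p ≤ q ↔ p.level ≤ q.level ∧ q.toSet ⊆ p.toSet := Iff.rfl

lemma toSet_eq_ball [∀ n, (R n).IsSymm] [∀ n, (R n).IsTrans] {p : LevelCell R N} {x : X}
    (hx : x ∈ p.toSet) : p.toSet = UniformSpace.ball x (R p.level) := by
  obtain ⟨y, hy⟩ := p.exists_ball_eq
  rw [← hy] at hx ⊢
  exact ball_eq_of_mem hx

lemma le_of_mem [∀ n, (R n).IsSymm] [∀ n, (R n).IsTrans] (hR : Antitone R) {p q : LevelCell R N}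
    {x : X} (hp : x ∈ p.toSet) (hq : x ∈ q.toSet) (hpq : p.level ≤ q.level) : p ≤ q := by
  rw [le_iff, toSet_eq_ball hp, toSet_eq_ball hq]
  exact ⟨hpq, UniformSpace.ball_mono (hR hpq) x⟩

lemma isNet_toSet [∀ n, (R n).IsSymm] [∀ n, (R n).IsTrans] (hR : Antitone R) :
    IsNet (toSet : LevelCell R N → Set X) where
  antitone _ _ hpq := hpq.2
  le_or_le p q _ hp hq := (le_total p.level q.level).imp (le_of_mem hR hp hq) (le_of_mem hR hq hp)

lemma level_strictMono [∀ n, (R n).IsRefl] [∀ n, (R n).IsSymm] [∀ n, (R n).IsTrans]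
    (hR : Antitone R) : StrictMono (level : LevelCell R N → ℕ) := by
  intro p q hpq
  obtain ⟨x, hx⟩ := q.exists_ball_eq
  have hxq : x ∈ q.toSet := hx ▸ (R q.level).refl x
  have hxp : x ∈ p.toSet := hpq.le.2 hxq
  exact lt_of_not_ge fun hqp => hpq.not_ge (le_of_mem hR hxq hxp hqp)

end LevelCell

end LevelCell

section BowenBall

variable {X : Type*} [MetricSpace X] {T : X → X} {s t ε : ℝ} {N : ℕ} {Z : Set X}

lemma bowenBall_eq_ball_dynEntourage (T : X → X) (x : X) (n : ℕ) (ε : ℝ) :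
    bowenBall T x n ε =
      UniformSpace.ball x (Dynamics.dynEntourage T {p | dist p.1 p.2 < ε} n) := by
  ext y
  simp [bowenBall, UniformSpace.ball, Dynamics.mem_dynEntourage]

lemma Mpre_mono_set (T : X → X) (s : ℝ) (N : ℕ) (ε : ℝ) : Monotone (Mpre T s N ε) :=
  fun _ _ hKZ => iInf₂_mono fun _ _ => iInf₂_mono fun _ _ =>
    iInf_mono' fun h => ⟨hKZ.trans h, le_rfl⟩

lemma Mpre_le_tsum {J : Type*} [Countable J] [Nonempty X] {x : J → X} {n : J → ℕ}
    (hn : ∀ j, N ≤ n j) (hZ : Z ⊆ ⋃ j, bowenBall T (x j) (n j) ε) :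
    Mpre T s N ε Z ≤ ∑' j, ENNReal.ofReal (Real.exp (-s * n j)) := by
  obtain ⟨φ, hφ⟩ := exists_injective_nat J
  set y : ℕ → X := Function.extend φ x fun _ => Classical.arbitrary X
  set m : ℕ → ℕ := Function.extend φ n 0
  have hy (j : J) : y (φ j) = x j := hφ.extend_apply _ _ j
  have hm (j : J) : m (φ j) = n j := hφ.extend_apply _ _ j
  have hmN : ∀ i ∈ range φ, N ≤ m i := forall_mem_range.2 fun j => (hm j).symm ▸ hn j
  have hcov : Z ⊆ ⋃ i ∈ range φ, bowenBall T (y i) (m i) ε := by simpa [hy, hm] using hZ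
  calc Mpre T s N ε Z ≤ ∑' i : range φ, ENNReal.ofReal (Real.exp (-s * m i)) :=
        iInf₂_le_of_le (range φ) y (iInf₂_le_of_le m hmN (iInf_le _ hcov))
    _ = ∑' j, ENNReal.ofReal (Real.exp (-s * n j)) := by
        rw [tsum_range (fun i => ENNReal.ofReal (Real.exp (-s * m i))) hφ]
        simp only [hm]

lemma Mpre_mono_level (T : X → X) (s ε : ℝ) (Z : Set X) : Monotone fun N => Mpre T s N ε Z :=
  fun _ _ hMN => iInf₂_mono fun _ _ => iInf_mono fun _ =>
    iInf_mono' fun hn => ⟨fun i hi => hMN.trans (hn i hi), le_rfl⟩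

lemma exp_mul_Mpre_le (hts : t ≤ s) (T : X → X) (N : ℕ) (ε : ℝ) (Z : Set X) :
    ENNReal.ofReal (Real.exp ((s - t) * N)) * Mpre T s N ε Z ≤ Mpre T t N ε Z := by
  refine le_iInf₂ fun I x => le_iInf₂ fun n hn => le_iInf fun hcov => ?_
  have hexp (i : I) : Real.exp ((s - t) * N) * Real.exp (-s * n i) ≤ Real.exp (-t * n i) := by
    have hNn : (N : ℝ) ≤ n i := by exact_mod_cast hn i i.2
    rw [← Real.exp_add, Real.exp_le_exp]
    linarith [mul_le_mul_of_nonneg_left hNn (sub_nonneg.2 hts)]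
  calc ENNReal.ofReal (Real.exp ((s - t) * N)) * Mpre T s N ε Z
      ≤ ENNReal.ofReal (Real.exp ((s - t) * N)) *
          ∑' i : I, ENNReal.ofReal (Real.exp (-s * n i)) := by
        gcongr
        exact iInf₂_le_of_le I x (iInf₂_le_of_le n hn (iInf_le _ hcov))
    _ = ∑' i : I, ENNReal.ofReal (Real.exp ((s - t) * N) * Real.exp (-s * n i)) := by
        simp only [← ENNReal.tsum_mul_left, ENNReal.ofReal_mul (Real.exp_pos _).le]
    _ ≤ ∑' i : I, ENNReal.ofReal (Real.exp (-t * n i)) :=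
        ENNReal.tsum_le_tsum fun i => ENNReal.ofReal_le_ofReal (hexp i)

lemma bowenEntropy_mono (T : X → X) : Monotone (bowenEntropy T) := by
  refine fun K Z hKZ => iSup_mono fun s => iSup_mono' fun hs => ⟨top_le_iff.1 (hs ▸ ?_), le_rfl⟩
  exact iSup₂_mono fun ε _ => iSup_mono fun N => Mpre_mono_set T s N ε hKZ

lemma Mtop_eq_top_of_Mpre_pos (hε : 0 < ε) (hpos : 0 < Mpre T s N ε Z) (hts : t < s) :
    Mtop T t Z = ∞ := by
  have hlim : Tendsto (fun n : ℕ => ENNReal.ofReal (Real.exp ((s - t) * n)) * Mpre T s N ε Z)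
      atTop (𝓝 ∞) := by
    rw [← ENNReal.top_mul hpos.ne']
    refine ENNReal.Tendsto.mul_const ?_ (Or.inl ENNReal.top_ne_zero)
    exact ENNReal.tendsto_ofReal_atTop.comp <| Real.tendsto_exp_atTop.comp <|
      tendsto_natCast_atTop_atTop.const_mul_atTop (sub_pos.2 hts)
  refine top_le_iff.1 (le_of_tendsto hlim ?_)
  filter_upwards [eventually_ge_atTop N] with n hn
  calc ENNReal.ofReal (Real.exp ((s - t) * n)) * Mpre T s N ε Z
      ≤ ENNReal.ofReal (Real.exp ((s - t) * n)) * Mpre T s n ε Z := by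
        gcongr
        exact Mpre_mono_level T s ε Z hn
    _ ≤ Mpre T t n ε Z := exp_mul_Mpre_le hts.le T n ε Z
    _ ≤ MpreEps T t ε Z := le_iSup (fun N => Mpre T t N ε Z) n
    _ ≤ Mtop T t Z := le_iSup₂ (f := fun ε (_ : 0 < ε) => MpreEps T t ε Z) ε hε

lemma ofReal_le_bowenEntropy_of_Mpre_pos (hε : 0 < ε) (hpos : 0 < Mpre T s N ε Z) :
    ENNReal.ofReal s ≤ bowenEntropy T Z := by
  have hlim : Tendsto ENNReal.ofReal (𝓝[<] s) (𝓝 (ENNReal.ofReal s)) :=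
    (ENNReal.continuous_ofReal.tendsto s).mono_left nhdsWithin_le_nhds
  refine le_of_tendsto hlim (eventually_nhdsWithin_of_forall fun t hts => ?_)
  exact le_iSup₂_of_le t (Mtop_eq_top_of_Mpre_pos hε hpos hts) le_rfl

end BowenBall

section CellContent

variable {X : Type*} {T : X → X} {V : SetRel X X} {s ε δ : ℝ} {N : ℕ} {Z : Set X}

instance isTrans_dynEntourage [V.IsTrans] (n : ℕ) : (Dynamics.dynEntourage T V n).IsTrans where
  trans _ _ _ hxy hyz := Dynamics.mem_dynEntourage.2 fun k hk =>
    V.trans (Dynamics.mem_dynEntourage.1 hxy k hk) (Dynamics.mem_dynEntourage.1 hyz k hk)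

/-- The analogue of `M^s_{N,ε}` in which Bowen balls are replaced by the dynamical balls of an
equivalence relation `V`: if `V` is given by a partition, these are the cylinder sets of words
of length at least `N`. -/
noncomputable def cellContent (T : X → X) (V : SetRel X X) (s : ℝ) (N : ℕ) : Set X → ℝ≥0∞ :=
  coverContent (LevelCell.toSet : LevelCell (Dynamics.dynEntourage T V) N → Set X)
    fun p => ENNReal.ofReal (Real.exp (-s * p.level))

lemma isCapacity_cellContent [UniformSpace X] (hT : Continuous T) [V.IsSymm] [V.IsTrans]
    (hV : V ∈ uniformity X) (s : ℝ) (N : ℕ) : IsCapacity (cellContent T V s N) := by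
  have := isRefl_of_mem_uniformity hV
  have hanti := Dynamics.dynEntourage_antitone T V
  have : WellFoundedLT (LevelCell (Dynamics.dynEntourage T V) N) :=
    (LevelCell.level_strictMono hanti).wellFoundedLT
  refine (LevelCell.isNet_toSet hanti).isCapacity_coverContent (fun p => ?_) _
  refine isOpen_iff_mem_nhds.2 fun x hx => ?_
  rw [LevelCell.toSet_eq_ball hx]
  exact Dynamics.ball_dynEntourage_mem_nhds hT hV p.level x

variable [MetricSpace X]

lemma Mpre_le_cellContent [Nonempty X] (hV : V ⊆ {p | dist p.1 p.2 < ε}) (s : ℝ) (N : ℕ)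
    (Z : Set X) : Mpre T s N ε Z ≤ cellContent T V s N Z := by
  refine le_iInf₂ fun A hA => ?_
  by_cases htop : ∑' p : A, ENNReal.ofReal (Real.exp (-s * p.1.level)) = ∞
  · exact htop ▸ le_top
  have hcount : Countable A := by
    have hsupp := Summable.countable_support_ennreal htop
    rwa [Function.support_eq_univ fun p => (ENNReal.ofReal_pos.2 (Real.exp_pos _)).ne',
      countable_univ_iff] at hsupp
  choose x hx using fun p : A => p.1.exists_ball_eq
  refine Mpre_le_tsum (x := x) (fun p : A => p.1.2.1) (hA.trans (iUnion₂_subset fun p hp => ?_))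
  refine subset_iUnion_of_subset ⟨p, hp⟩ ?_
  rw [bowenBall_eq_ball_dynEntourage, ← hx ⟨p, hp⟩]
  exact UniformSpace.ball_mono (Dynamics.dynEntourage_monotone T _ hV) _

lemma cellContent_le_Mpre (hV : {p | dist p.1 p.2 < δ} ⊆ V) (s : ℝ) (N : ℕ) (Z : Set X) :
    cellContent T V s N Z ≤ Mpre T s N δ Z := by
  refine le_iInf₂ fun I x => le_iInf₂ fun n hn => le_iInf fun hcov => ?_
  set φ : I → LevelCell (Dynamics.dynEntourage T V) N := fun i => .of _ (x i) (hn i i.2)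
  have hcov' : Z ⊆ ⋃ p ∈ range φ, p.toSet := by
    rw [biUnion_range]
    refine hcov.trans (iUnion₂_subset fun i hi => subset_iUnion_of_subset ⟨i, hi⟩ ?_)
    rw [bowenBall_eq_ball_dynEntourage]
    exact UniformSpace.ball_mono (Dynamics.dynEntourage_monotone T _ hV) _
  calc cellContent T V s N Z
      ≤ ∑' p : range φ, ENNReal.ofReal (Real.exp (-s * p.1.level)) := coverContent_le_tsum hcov'
    _ ≤ ∑' i : I, ENNReal.ofReal (Real.exp (-s * n i)) :=
        ENNReal.tsum_le_tsum_comp_of_surjective rangeFactorization_surjective _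

lemma exists_isCompact_Mpre_pos [IsUltraUniformity X] (hT : Continuous T) (hZ : AnalyticSet Z)
    (hε : 0 < ε) (hpos : 0 < Mpre T s N ε Z) :
    ∃ K ⊆ Z, IsCompact K ∧ ∃ δ > 0, 0 < Mpre T s N δ K := by
  obtain rfl | ⟨z, -⟩ := Z.eq_empty_or_nonempty
  · exact ⟨∅, Subset.rfl, isCompact_empty, ε, hε, hpos⟩
  have : Nonempty X := ⟨z⟩
  obtain ⟨V, ⟨hV, hsymm, htrans⟩, hVε⟩ :=
    (IsUltraUniformity.hasBasis (X := X)).mem_iff.1 (Metric.dist_mem_uniformity hε)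
  obtain ⟨δ, hδ, hδV⟩ := Metric.uniformity_basis_dist.mem_iff.1 hV
  obtain ⟨c, hc_pos, hc⟩ := exists_between (hpos.trans_le (Mpre_le_cellContent hVε s N Z))
  obtain ⟨K, hKZ, hK, hcK⟩ := (isCapacity_cellContent hT hV s N).exists_isCompact_le hZ hc
  exact ⟨K, hKZ, hK, δ, hδ, (hc_pos.trans_le hcK).trans_le (cellContent_le_Mpre hδV s N K)⟩

end CellContent

lemma isUltraUniformity_of_forall_exists_open_partition {X : Type*} [PseudoMetricSpace X]
    [CompactSpace X]
    (h : ∀ δ > 0, ∃ P : Set (Set X), (∀ U ∈ P, IsOpen U ∧ Metric.diam U < δ) ∧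
      P.PairwiseDisjoint id ∧ ⋃₀ P = univ) : IsUltraUniformity X := by
  refine ⟨hasBasis_iff.2 fun W => ⟨fun hW => ?_, fun ⟨V, hV, hVW⟩ => mem_of_superset hV.1 hVW⟩⟩
  obtain ⟨δ, hδ, hδW⟩ := Metric.uniformity_basis_dist.mem_iff.1 hW
  obtain ⟨P, hP, hdisj, hcov⟩ := h δ hδ
  set V : SetRel X X := ⋃ U ∈ P, U ×ˢ U
  have mem_V {x y : X} : (x, y) ∈ V ↔ ∃ U ∈ P, x ∈ U ∧ y ∈ U := by
    simp only [V, mem_iUnion₂, exists_prop, mem_prod]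
  have hV : V ∈ uniformity X := by
    rw [← nhdsSet_diagonal_eq_uniformity]
    refine (isOpen_biUnion fun U hU => (hP U hU).1.prod (hP U hU).1).mem_nhdsSet.2 ?_
    rintro ⟨x, y⟩ (rfl : x = y)
    obtain ⟨U, hU, hx⟩ := mem_sUnion.1 (hcov ▸ mem_univ x)
    exact mem_V.2 ⟨U, hU, hx, hx⟩
  have hsymm : V.IsSymm := ⟨fun x y hxy => mem_V.2 <| by simpa only [and_comm] using mem_V.1 hxy⟩
  have htrans : V.IsTrans := by
    refine ⟨fun x y z hxy hyz => ?_⟩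
    obtain ⟨U, hU, hxU, hyU⟩ := mem_V.1 hxy
    obtain ⟨U', hU', hyU', hzU'⟩ := mem_V.1 hyz
    obtain rfl : U = U' := hdisj.elim_set hU hU' y hyU hyU'
    exact mem_V.2 ⟨U, hU, hxU, hzU'⟩
  refine ⟨V, ⟨hV, hsymm, htrans⟩, fun p hp => hδW ?_⟩
  obtain ⟨U, hU, hpU, hpU'⟩ := mem_V.1 hp
  exact (Metric.dist_le_diam_of_mem Metric.isBounded_of_compactSpace hpU hpU').trans_lt (hP U hU).2

/-- Non-archimedean uniformities, such as those of Baire space and of the `p`-adic numbers, are the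
uniform counterpart of zero-dimensionality. -/
theorem bowenEntropy_analytic_eq_iSup_compact_of_zeroDimensional_general
    {X : Type*} [MetricSpace X] [IsUltraUniformity X] {T : X → X} (hT : Continuous T)
    {Z : Set X} (hZ : AnalyticSet Z) :
    bowenEntropy T Z = ⨆ (K : Set X) (_ : K ⊆ Z) (_ : IsCompact K), bowenEntropy T K := by
  refine le_antisymm (iSup₂_le fun s hs => ?_)
    (iSup₂_le fun K hKZ => iSup_le fun _ => bowenEntropy_mono T hKZ)
  have hpos : 0 < Mtop T s Z := hs ▸ ENNReal.zero_lt_top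
  simp only [Mtop, MpreEps, lt_iSup_iff] at hpos
  obtain ⟨ε, hε, N, hN⟩ := hpos
  obtain ⟨K, hKZ, hK, δ, hδ, hKδ⟩ := exists_isCompact_Mpre_pos hT hZ hε hN
  exact le_iSup₂_of_le K hKZ (le_iSup_of_le hK (ofReal_le_bowenEntropy_of_Mpre_pos hδ hKδ))

/-- **Feng–Huang, Theorem 3.5**: if `(X,T)` is a topological dynamical system with `X`
zero-dimensional (for every `δ > 0` there is a finite partition of `X` into closed-open
sets of diameter less than `δ`), then for every analytic set `Z ⊆ X`,
`h^B_top(T,Z) = sup { h^B_top(T,K) : K ⊆ Z compact }`. -/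
theorem bowenEntropy_analytic_eq_iSup_compact_of_zeroDimensional
    {X : Type*} [MetricSpace X] [CompactSpace X]
    (T : X → X) (hT : Continuous T)
    (hzero : ∀ δ : ℝ, 0 < δ → ∃ P : Finset (Set X),
      (∀ U ∈ P, IsClopen U ∧ Metric.diam U < δ) ∧
      (P : Set (Set X)).PairwiseDisjoint id ∧ ⋃₀ (P : Set (Set X)) = Set.univ)
    (Z : Set X) (hZ : MeasureTheory.AnalyticSet Z) :
    bowenEntropy T Z = ⨆ (K : Set X) (_ : K ⊆ Z) (_ : IsCompact K), bowenEntropy T K := by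
  have : IsUltraUniformity X := isUltraUniformity_of_forall_exists_open_partition fun δ hδ =>
    let ⟨P, hP, hcov⟩ := hzero δ hδ
    ⟨P, fun U hU => ⟨(hP U hU).1.isOpen, (hP U hU).2⟩, hcov⟩
  exact bowenEntropy_analytic_eq_iSup_compact_of_zeroDimensional_general hT hZ
end

section
/- Let π : (X,T) → (Y,S) be a factor map between topological dynamical systems. Then for every E ⊆ X, h^B_top(S, π(E)) ≤ h^B_top(T, E) ≤ h^B_top(S, π(E)) + sup_{y∈Y} h^{UC}_top(T, π^{−1}(y)). -/
/-!
For the lower bound, `π` is uniformly continuous and intertwines `T` with `S`, so it maps a Bowen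
ball of small radius in `X` into a Bowen ball of prescribed radius in `Y`; covers of `E` therefore
push forward to covers of `π '' E` of the same weight.

For the upper bound, let `b` exceed the upper capacity entropy of every fibre and fix `ε > 0`. Each
fibre over `y` is covered, at some time `m(y) ≥ 1`, by at most `exp (b m(y))` Bowen balls of radius
`ε`. As `π` is a closed map, these balls cover the preimage of a neighbourhood of `y`, and by
compactness one radius `δ` serves for all `y` while the times `m(y)` stay below some `M`.
Following an orbit segment of length `n` in `Y` and concatenating the fibre covers met along it, the
preimage of a set of `d_n`-diameter less than `δ` is covered by at most `exp (b (n + M))` sets of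
small `d_n`-diameter. Hence a cover of `π '' E` by Bowen balls lifts to a cover of `E` whose weight
at exponent `s + b` is at most `exp (b M)` times the original weight at exponent `s`.
-/

open Filter Set MeasureTheory Topology
open scoped ENNReal NNReal

section FactorMaps

variable {X Y : Type*} [MetricSpace X] [MetricSpace Y] {T : X → X} {S : Y → Y} {π : X → Y}
  {Z : Set X}

/-! ### Weights of covers and the critical exponent -/

lemma Mpre_le {s : ℝ} {N : ℕ} {ε : ℝ} (I : Set ℕ) (x : ℕ → X) (n : ℕ → ℕ) (hn : ∀ i ∈ I, N ≤ n i)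
    (hZ : Z ⊆ ⋃ i ∈ I, bowenBall T (x i) (n i) ε) :
    Mpre T s N ε Z ≤ ∑' i : I, ENNReal.ofReal (Real.exp (-s * n i)) :=
  iInf_le_of_le I <| iInf_le_of_le x <| iInf_le_of_le n <| iInf₂_le hn hZ

lemma Mpre_le_tsum_of_countable {ι : Type*} [Countable ι] [Nonempty X] {s : ℝ} {N : ℕ} {ε : ℝ}
    (x : ι → X) (n : ι → ℕ) (hn : ∀ i, N ≤ n i) (hZ : Z ⊆ ⋃ i, bowenBall T (x i) (n i) ε) :
    Mpre T s N ε Z ≤ ∑' i, ENNReal.ofReal (Real.exp (-s * n i)) := by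
  obtain ⟨f, hf⟩ := exists_injective_nat ι
  calc Mpre T s N ε Z
      ≤ ∑' j : range f, ENNReal.ofReal (Real.exp (-s * Function.extend f n 0 j)) := by
        refine Mpre_le _ (Function.extend f x fun _ => Classical.arbitrary X) _ ?_ ?_
        · rintro _ ⟨i, rfl⟩
          simpa only [hf.extend_apply] using hn i
        · simpa only [biUnion_range, hf.extend_apply] using hZ
    _ = ∑' i, ENNReal.ofReal (Real.exp (-s * n i)) := by
        rw [← (Equiv.ofInjective f hf).tsum_eq]
        simp only [Equiv.ofInjective_apply, hf.extend_apply]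

lemma le_mul_Mpre {s : ℝ} {N : ℕ} {ε : ℝ} {a C : ℝ≥0∞} (hC₀ : C ≠ 0) (hC : C ≠ ∞)
    (h : ∀ (I : Set ℕ) (x : ℕ → X) (n : ℕ → ℕ), (∀ i ∈ I, N ≤ n i) →
      Z ⊆ ⋃ i ∈ I, bowenBall T (x i) (n i) ε →
      a ≤ ∑' i : I, C * ENNReal.ofReal (Real.exp (-s * n i))) :
    a ≤ C * Mpre T s N ε Z := by
  rw [mul_comm, ← ENNReal.div_le_iff_le_mul (.inl hC₀) (.inl hC)]
  refine le_iInf fun I => le_iInf fun x => le_iInf fun n => le_iInf₂ fun hn hZ => ?_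
  rw [ENNReal.div_le_iff_le_mul (.inl hC₀) (.inl hC), mul_comm, ← ENNReal.tsum_mul_left]
  exact h I x n hn hZ

lemma Mpre_mono_left (s ε : ℝ) (Z : Set X) : Monotone fun N => Mpre T s N ε Z :=
  fun _ _ hN => le_iInf fun I => le_iInf fun x => le_iInf fun n => le_iInf₂ fun hn hZ =>
    Mpre_le I x n (fun i hi => hN.trans (hn i hi)) hZ

lemma ofReal_exp_mul_ofReal_exp (a b : ℝ) :
    ENNReal.ofReal (Real.exp a) * ENNReal.ofReal (Real.exp b) =
      ENNReal.ofReal (Real.exp (a + b)) := by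
  rw [← ENNReal.ofReal_mul (Real.exp_pos a).le, Real.exp_add]

lemma Mpre_add_le {η : ℝ} (hη : 0 ≤ η) (s : ℝ) (N : ℕ) (ε : ℝ) (Z : Set X) :
    Mpre T (s + η) N ε Z ≤ ENNReal.ofReal (Real.exp (-η * N)) * Mpre T s N ε Z := by
  refine le_mul_Mpre (by simp [Real.exp_pos]) ENNReal.ofReal_ne_top fun I x n hn hZ =>
    (Mpre_le I x n hn hZ).trans (ENNReal.tsum_le_tsum fun i => ?_)
  rw [ofReal_exp_mul_ofReal_exp]
  have hNn : (N : ℝ) ≤ n i := Nat.cast_le.2 (hn i i.2)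
  gcongr
  linarith [mul_le_mul_of_nonneg_left hNn hη]

lemma Mpre_le_Mtop (s : ℝ) (N : ℕ) {ε : ℝ} (hε : 0 < ε) (Z : Set X) :
    Mpre T s N ε Z ≤ Mtop T s Z :=
  (le_iSup (fun N => Mpre T s N ε Z) N).trans
    (le_iSup₂ (f := fun (ε : ℝ) (_ : 0 < ε) => MpreEps T s ε Z) ε hε)

lemma Mtop_eq_zero_iff {s : ℝ} : Mtop T s Z = 0 ↔ ∀ ε > 0, ∀ N, Mpre T s N ε Z = 0 := by
  simp only [Mtop, MpreEps, ENNReal.iSup_eq_zero, gt_iff_lt]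

lemma Mtop_eq_zero_of_lt {r s : ℝ} (hrs : r < s) (h : Mtop T r Z ≠ ∞) : Mtop T s Z = 0 := by
  refine Mtop_eq_zero_iff.2 fun ε hε N => ?_
  have hbound : ∀ K ≥ N,
      Mpre T s N ε Z ≤ ENNReal.ofReal (Real.exp (-(s - r) * K)) * Mtop T r Z := fun K hK =>
    calc Mpre T s N ε Z ≤ Mpre T (r + (s - r)) K ε Z := by
          rw [add_sub_cancel]
          exact Mpre_mono_left s ε Z hK
      _ ≤ ENNReal.ofReal (Real.exp (-(s - r) * K)) * Mpre T r K ε Z :=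
          Mpre_add_le (sub_nonneg.2 hrs.le) r K ε Z
      _ ≤ _ := by gcongr; exact Mpre_le_Mtop r K hε Z
  have hexp : Tendsto (fun K : ℕ => Real.exp (-(s - r) * K)) atTop (𝓝 0) :=
    Real.tendsto_exp_atBot.comp
      (tendsto_natCast_atTop_atTop.const_mul_atTop_of_neg (neg_neg_of_pos (sub_pos.2 hrs)))
  have hlim := ENNReal.Tendsto.mul_const (ENNReal.tendsto_ofReal hexp) (.inr h)
  simpa using ge_of_tendsto hlim (eventually_atTop.2 ⟨N, hbound⟩)

lemma ofReal_le_bowenEntropy {s : ℝ} (h : Mtop T s Z = ∞) :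
    ENNReal.ofReal s ≤ bowenEntropy T Z :=
  le_iSup₂ (f := fun (s : ℝ) (_ : Mtop T s Z = ∞) => ENNReal.ofReal s) s h

lemma bowenEntropy_le_ofReal {s : ℝ} (h : Mtop T s Z ≠ ∞) :
    bowenEntropy T Z ≤ ENNReal.ofReal s := by
  refine iSup₂_le fun r hr => ENNReal.ofReal_le_ofReal ?_
  by_contra! hsr
  simp [Mtop_eq_zero_of_lt hsr h] at hr

lemma Mtop_eq_zero_of_bowenEntropy_lt {s : ℝ} (h : bowenEntropy T Z < ENNReal.ofReal s) :
    Mtop T s Z = 0 := by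
  obtain ⟨r, -, hZr, hrs⟩ := ENNReal.lt_iff_exists_real_btwn.1 h
  exact Mtop_eq_zero_of_lt ((ENNReal.ofReal_lt_ofReal_iff').1 hrs).1
    fun hr => hZr.not_ge (ofReal_le_bowenEntropy hr)

-- `Mpre` asks for a sequence of centres even when no ball is used, and an empty space has none.
lemma bowenEntropy_of_isEmpty [IsEmpty X] (T : X → X) (Z : Set X) : bowenEntropy T Z = ∞ := by
  have hM (s : ℝ) : Mtop T s Z = ∞ :=
    top_le_iff.1 <| le_trans (by simp [Mpre]) (Mpre_le_Mtop s 0 one_pos Z)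
  exact ENNReal.eq_top_of_forall_nnreal_le fun r => by
    simpa using ofReal_le_bowenEntropy (hM r)

/-! ### Images under a uniformly continuous semiconjugacy -/

lemma Mtop_image_le (hπ : UniformContinuous π) (hπTS : Function.Semiconj π T S) (s : ℝ)
    (E : Set X) : Mtop S s (π '' E) ≤ Mtop T s E := by
  refine iSup₂_le fun ε hε => iSup_le fun N => ?_
  obtain ⟨δ, hδ, hπδ⟩ := Metric.uniformContinuous_iff.1 hπ ε hε
  refine le_trans ?_ (Mpre_le_Mtop s N hδ E)
  refine le_iInf fun I => le_iInf fun x => le_iInf fun n => le_iInf₂ fun hn hE =>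
    Mpre_le I (π ∘ x) n hn ?_
  rintro _ ⟨e, he, rfl⟩
  obtain ⟨i, hi, hei⟩ := mem_iUnion₂.1 (hE he)
  refine mem_iUnion₂.2 ⟨i, hi, fun k hk => ?_⟩
  rw [Function.comp_apply, ← (hπTS.iterate_right k).eq, ← (hπTS.iterate_right k).eq]
  exact hπδ (hei k hk)

theorem bowenEntropy_image_le (hπ : UniformContinuous π) (hπTS : Function.Semiconj π T S)
    (E : Set X) : bowenEntropy S (π '' E) ≤ bowenEntropy T E :=
  iSup₂_le fun s hs =>
    ofReal_le_bowenEntropy (top_le_iff.1 (hs ▸ Mtop_image_le hπ hπTS s E))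

/-! ### Separated and spanning sets -/

/-- `(n, ε)`-separated sets: distinct points are at `d_n`-distance more than `ε`. The separation
condition is spelled as in `maxSep`. -/
def IsBowenSeparated (T : X → X) (n : ℕ) (ε : ℝ) (E : Set X) : Prop :=
  E.Pairwise fun x y => ∃ k < n, ε < dist (T^[k] x) (T^[k] y)

lemma IsBowenSeparated.insert {n : ℕ} {ε : ℝ} {E : Set X} {x : X} (hE : IsBowenSeparated T n ε E)
    (hx : ∀ z ∈ E, x ∉ bowenClosedBall T z n ε) : IsBowenSeparated T n ε (insert x E) := by
  have hsymm : Std.Symm fun x y => ∃ k < n, ε < dist (T^[k] x) (T^[k] y) :=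
    ⟨fun x y => by simp only [dist_comm, imp_self]⟩
  refine hE.insert_of_symm fun z hz _ => ?_
  simpa [bowenClosedBall, dist_comm] using hx z hz

lemma IsBowenSeparated.card_le_maxSep {n : ℕ} {ε : ℝ} {E : Finset X}
    (hE : IsBowenSeparated T n ε E) (hEZ : ↑E ⊆ Z) : (E.card : ℝ≥0∞) ≤ maxSep T Z n ε :=
  le_iSup₂_of_le E ⟨hEZ, hE⟩ le_rfl

-- A separated set of maximal cardinality is spanning.
lemma exists_finset_subset_biUnion_bowenClosedBall {n : ℕ} {ε : ℝ} (hε : 0 ≤ ε)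
    (h : maxSep T Z n ε ≠ ∞) :
    ∃ F : Finset X, F.card ≤ maxSep T Z n ε ∧ Z ⊆ ⋃ z ∈ F, bowenClosedBall T z n ε := by
  classical
  let 𝓕 : Set (Finset X) := {E | IsBowenSeparated T n ε E ∧ ↑E ⊆ Z}
  have hfin : (Finset.card '' 𝓕).Finite := by
    obtain ⟨c, hc⟩ := ENNReal.exists_nat_gt h
    refine (finite_Iio c).subset ?_
    rintro _ ⟨E, hE, rfl⟩
    exact Nat.cast_lt.1 ((hE.1.card_le_maxSep hE.2).trans_lt hc)
  have hne : 𝓕.Nonempty := ⟨∅, by simp [𝓕, IsBowenSeparated]⟩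
  obtain ⟨F, hF, hmax⟩ := hfin.exists_maximalFor' Finset.card 𝓕 hne
  refine ⟨F, hF.1.card_le_maxSep hF.2, fun x hx => ?_⟩
  by_contra hxF
  simp only [mem_iUnion, not_exists] at hxF
  have hxF' : x ∉ F := fun hmem => hxF x hmem fun k _ => (dist_self _).trans_le hε
  have hins : insert x F ∈ 𝓕 := by
    simp only [𝓕, mem_ofPred_eq, Finset.coe_insert]
    exact ⟨hF.1.insert hxF, insert_subset hx hF.2⟩
  have := hmax hins (Finset.card_le_card (Finset.subset_insert x F))
  rw [Finset.card_insert_of_notMem hxF'] at this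
  lia

lemma le_ofReal_exp_of_elog_le {x : ℝ≥0∞} {c : ℝ} (hc : 0 ≤ c) (h : elog x ≤ ENNReal.ofReal c) :
    x ≤ ENNReal.ofReal (Real.exp c) := by
  have hx : x ≠ ∞ := by
    rintro rfl
    simp [elog] at h
  rw [elog, if_neg hx, ENNReal.ofReal_le_ofReal_iff hc] at h
  rw [ENNReal.le_ofReal_iff_toReal_le hx (Real.exp_pos c).le]
  exact (Real.le_exp_log _).trans (Real.exp_le_exp.2 h)

lemma exists_finset_subset_biUnion_bowenBall {b : ℝ} (h : upcapEntropy T Z < ENNReal.ofReal b)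
    {ε : ℝ} (hε : 0 < ε) :
    ∃ m ≥ (1 : ℕ), ∃ F : Finset X, F.card ≤ ENNReal.ofReal (Real.exp (b * m)) ∧
      Z ⊆ ⋃ z ∈ F, bowenBall T z m ε := by
  have hlimsup : limsup (fun n : ℕ => elog (maxSep T Z n (ε / 2)) / n) atTop < ENNReal.ofReal b :=
    (le_iSup₂ (f := fun (ε : ℝ) (_ : 0 < ε) =>
      limsup (fun n : ℕ => elog (maxSep T Z n ε) / n) atTop) (ε / 2) (half_pos hε)).trans_lt h
  obtain ⟨m, hm, hm₁⟩ := ((eventually_lt_of_limsup_lt hlimsup).and (eventually_ge_atTop 1)).exists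
  have hb : 0 < b := ENNReal.ofReal_pos.1 (bot_le.trans_lt h)
  have hm₀ : (m : ℝ≥0∞) ≠ 0 := Nat.cast_ne_zero.2 (by lia)
  have hsep : maxSep T Z m (ε / 2) ≤ ENNReal.ofReal (Real.exp (b * m)) := by
    refine le_ofReal_exp_of_elog_le (by positivity) ?_
    rw [ENNReal.ofReal_mul hb.le, ENNReal.ofReal_natCast]
    exact (ENNReal.div_le_iff_le_mul (.inl hm₀) (.inl (ENNReal.natCast_ne_top m))).1 hm.le
  obtain ⟨F, hFcard, hF⟩ := exists_finset_subset_biUnion_bowenClosedBall (half_pos hε).le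
    (ne_top_of_le_ne_top ENNReal.ofReal_ne_top hsep)
  refine ⟨m, hm₁, F, hFcard.trans hsep, hF.trans ?_⟩
  exact iUnion₂_mono fun z _ x hx k hk => (hx k hk).trans_lt (half_lt_self hε)

/-! ### Covers by sets of small Bowen diameter -/

/-- Sets of `d_n`-diameter less than `ε`, expressed pointwise: any two points of `A` are at
`d_n`-distance less than `ε`. -/
def IsBowenSmall (T : X → X) (n : ℕ) (ε : ℝ) (A : Set X) : Prop :=
  ∀ u ∈ A, ∀ v ∈ A, v ∈ bowenBall T u n ε

/-- `Z` is covered by at most `c` sets of `d_n`-diameter less than `ε`. Unlike covers by Bowen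
balls, such covers can be concatenated along orbits without enlarging `ε`. -/
def IsBowenCoverable (T : X → X) (n : ℕ) (ε : ℝ) (c : ℝ≥0∞) (Z : Set X) : Prop :=
  ∃ 𝒜 : Finset (Set X), 𝒜.card ≤ c ∧ (∀ A ∈ 𝒜, IsBowenSmall T n ε A) ∧ Z ⊆ ⋃ A ∈ 𝒜, A

lemma isBowenSmall_bowenBall (T : X → X) (z : X) (n : ℕ) (ε : ℝ) :
    IsBowenSmall T n (2 * ε) (bowenBall T z n ε) := fun u hu v hv k hk =>
  calc dist (T^[k] u) (T^[k] v)
      ≤ dist (T^[k] z) (T^[k] u) + dist (T^[k] z) (T^[k] v) := dist_triangle_left _ _ _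
    _ < 2 * ε := by linarith [hu k hk, hv k hk]

lemma IsBowenSmall.of_le {m n : ℕ} {ε : ℝ} {A : Set X} (hA : IsBowenSmall T n ε A) (hmn : m ≤ n) :
    IsBowenSmall T m ε A :=
  fun u hu v hv k hk => hA u hu v hv k (hk.trans_le hmn)

lemma IsBowenSmall.inter_preimage {m n : ℕ} {ε : ℝ} {A B : Set X} (hA : IsBowenSmall T m ε A)
    (hB : IsBowenSmall T n ε B) : IsBowenSmall T (m + n) ε (A ∩ T^[m] ⁻¹' B) := by
  intro u hu v hv k hk
  obtain hkm | hmk := lt_or_ge k m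
  · exact hA u hu.1 v hv.1 k hkm
  · have hBk := hB _ hu.2 _ hv.2 (k - m) (by lia)
    rwa [← Function.iterate_add_apply, ← Function.iterate_add_apply, Nat.sub_add_cancel hmk]
      at hBk

lemma IsBowenSmall.image_iterate {m n : ℕ} {ε : ℝ} {A : Set X} (hA : IsBowenSmall T (m + n) ε A) :
    IsBowenSmall T n ε (T^[m] '' A) := by
  rintro _ ⟨u, hu, rfl⟩ _ ⟨v, hv, rfl⟩ k hk
  rw [← Function.iterate_add_apply, ← Function.iterate_add_apply]
  exact hA u hu v hv (k + m) (by lia)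

lemma isBowenCoverable_empty (T : X → X) (n : ℕ) (ε : ℝ) (c : ℝ≥0∞) :
    IsBowenCoverable T n ε c ∅ :=
  ⟨∅, by simp⟩

lemma isBowenCoverable_zero {c : ℝ≥0∞} (hc : 1 ≤ c) (T : X → X) (ε : ℝ) (Z : Set X) :
    IsBowenCoverable T 0 ε c Z :=
  ⟨{Z}, by simpa using hc, by simp [IsBowenSmall, bowenBall], by simp⟩

lemma isBowenCoverable_biUnion_bowenBall (T : X → X) (n : ℕ) (ε : ℝ) (F : Finset X) :
    IsBowenCoverable T n (2 * ε) F.card (⋃ z ∈ F, bowenBall T z n ε) := by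
  classical
  refine ⟨F.image fun z => bowenBall T z n ε, by exact_mod_cast Finset.card_image_le, ?_, ?_⟩
  · simpa using fun z _ => isBowenSmall_bowenBall T z n ε
  · simp

namespace IsBowenCoverable

variable {m n : ℕ} {ε : ℝ} {c c' : ℝ≥0∞}

lemma mono {W : Set X} (h : IsBowenCoverable T n ε c Z) (hmn : m ≤ n) (hc : c ≤ c') (hW : W ⊆ Z) :
    IsBowenCoverable T m ε c' W :=
  let ⟨𝒜, hcard, hsmall, hcover⟩ := h
  ⟨𝒜, hcard.trans hc, fun A hA => (hsmall A hA).of_le hmn, hW.trans hcover⟩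

lemma concat (h : IsBowenCoverable T m ε c Z) (h' : IsBowenCoverable T n ε c' (T^[m] '' Z)) :
    IsBowenCoverable T (m + n) ε (c * c') Z := by
  classical
  obtain ⟨𝒜, hcard, hsmall, hcover⟩ := h
  obtain ⟨ℬ, hcard', hsmall', hcover'⟩ := h'
  refine ⟨Finset.image₂ (fun A B => A ∩ T^[m] ⁻¹' B) 𝒜 ℬ, ?_, ?_, fun x hx => ?_⟩
  · calc ((Finset.image₂ (fun A B => A ∩ T^[m] ⁻¹' B) 𝒜 ℬ).card : ℝ≥0∞)
        ≤ 𝒜.card * ℬ.card := by exact_mod_cast Finset.card_image₂_le _ _ _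
      _ ≤ c * c' := by gcongr
  · intro D hD
    obtain ⟨A, hA, B, hB, rfl⟩ := Finset.mem_image₂.1 hD
    exact (hsmall A hA).inter_preimage (hsmall' B hB)
  · obtain ⟨A, hA, hxA⟩ := mem_iUnion₂.1 (hcover hx)
    obtain ⟨B, hB, hxB⟩ := mem_iUnion₂.1 (hcover' (mem_image_of_mem _ hx))
    exact mem_iUnion₂.2 ⟨_, Finset.mem_image₂_of_mem hA hB, hxA, hxB⟩

lemma exists_finset_subset_biUnion_bowenBall (h : IsBowenCoverable T n ε c Z) :
    ∃ F : Finset X, F.card ≤ c ∧ Z ⊆ ⋃ z ∈ F, bowenBall T z n ε := by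
  classical
  obtain ⟨𝒜, hcard, hsmall, hcover⟩ := h
  obtain rfl | ⟨z₀, -⟩ := Z.eq_empty_or_nonempty
  · exact ⟨∅, by simp⟩
  have hcentre (A : Set X) : ∃ z, A.Nonempty → z ∈ A := by
    obtain rfl | ⟨z, hz⟩ := A.eq_empty_or_nonempty
    · exact ⟨z₀, fun h => absurd h not_nonempty_empty⟩
    · exact ⟨z, fun _ => hz⟩
  choose centre hcentre using hcentre
  refine ⟨𝒜.image centre, le_trans (mod_cast Finset.card_image_le) hcard, fun x hx => ?_⟩
  obtain ⟨A, hA, hxA⟩ := mem_iUnion₂.1 (hcover hx)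
  exact mem_iUnion₂.2 ⟨centre A, Finset.mem_image_of_mem _ hA,
    hsmall A hA _ (hcentre A ⟨x, hxA⟩) x hxA⟩

end IsBowenCoverable

/-! ### Preimages of small sets -/

lemma isOpen_bowenBall (hT : Continuous T) (x : X) (n : ℕ) (ε : ℝ) :
    IsOpen (bowenBall T x n ε) := by
  simp only [bowenBall, ofPred_forall]
  exact (finite_Iio n).isOpen_biInter fun k _ =>
    isOpen_lt (continuous_const.dist (hT.iterate k)) continuous_const

lemma exists_mem_nhds_isBowenCoverable_preimage (hT : Continuous T) (hπ : IsClosedMap π) {b : ℝ}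
    {y : Y} (hy : upcapEntropy T (π ⁻¹' {y}) < ENNReal.ofReal b) {ε : ℝ} (hε : 0 < ε) :
    ∃ m ≥ (1 : ℕ), ∃ W ∈ 𝓝 y,
      IsBowenCoverable T m ε (ENNReal.ofReal (Real.exp (b * m))) (π ⁻¹' W) := by
  obtain ⟨m, hm, F, hFcard, hF⟩ := exists_finset_subset_biUnion_bowenBall hy (half_pos hε)
  have hopen : IsOpen (⋃ z ∈ F, bowenBall T z m (ε / 2)) :=
    isOpen_biUnion fun z _ => isOpen_bowenBall hT z m (ε / 2)
  have hcover := isBowenCoverable_biUnion_bowenBall T m (ε / 2) F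
  rw [mul_div_cancel₀ ε two_ne_zero] at hcover
  exact ⟨m, hm, _, hπ.eventually_nhds_fiber y fun x hx => hopen.mem_nhds (hF hx),
    hcover.mono le_rfl hFcard fun x hx => hx x rfl⟩

lemma exists_ball_of_forall_exists_mem_nhds {α : Type*} [PseudoMetricSpace α] {K : Set α}
    (hK : IsCompact K) {P : ℕ → Set α → Prop} (hP : ∀ m, Antitone (P m))
    (h : ∀ y ∈ K, ∃ m, ∃ W ∈ 𝓝 y, P m W) :
    ∃ δ > 0, ∃ M, ∀ y ∈ K, ∃ m ≤ M, P m (Metric.ball y δ) := by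
  refine hK.induction_on (p := fun s => ∃ δ > 0, ∃ M, ∀ y ∈ s, ∃ m ≤ M, P m (Metric.ball y δ))
    ⟨1, one_pos, 0, by simp⟩ ?_ ?_ ?_
  · rintro s t hst ⟨δ, hδ, M, hM⟩
    exact ⟨δ, hδ, M, fun y hy => hM y (hst hy)⟩
  · rintro s t ⟨δ, hδ, M, hM⟩ ⟨δ', hδ', M', hM'⟩
    refine ⟨min δ δ', lt_min hδ hδ', max M M', ?_⟩
    rintro y (hy | hy)
    · obtain ⟨m, hm, hPm⟩ := hM y hy
      exact ⟨m, hm.trans (le_max_left _ _),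
        hP m (Metric.ball_subset_ball (min_le_left _ _)) hPm⟩
    · obtain ⟨m, hm, hPm⟩ := hM' y hy
      exact ⟨m, hm.trans (le_max_right _ _),
        hP m (Metric.ball_subset_ball (min_le_right _ _)) hPm⟩
  · intro y hy
    obtain ⟨m, W, hW, hPm⟩ := h y hy
    obtain ⟨r, hr, hrW⟩ := Metric.mem_nhds_iff.1 hW
    refine ⟨_, mem_nhdsWithin_of_mem_nhds (Metric.ball_mem_nhds y (half_pos hr)), r / 2,
      half_pos hr, m, fun y' hy' => ⟨m, le_rfl, hP m ?_ hPm⟩⟩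
    refine (Metric.ball_subset_ball' ?_).trans hrW
    linarith [Metric.mem_ball.1 hy']

lemma exists_isBowenCoverable_preimage_ball (hT : Continuous T) (hπ : IsClosedMap π)
    (hK : IsCompact (range π)) {b : ℝ}
    (hfib : ∀ y, upcapEntropy T (π ⁻¹' {y}) < ENNReal.ofReal b) {ε : ℝ} (hε : 0 < ε) :
    ∃ δ > 0, ∃ M : ℕ, ∀ x, ∃ m ≥ (1 : ℕ), m ≤ M ∧
      IsBowenCoverable T m ε (ENNReal.ofReal (Real.exp (b * m)))
        (π ⁻¹' Metric.ball (π x) δ) := by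
  obtain ⟨δ, hδ, M, hM⟩ := exists_ball_of_forall_exists_mem_nhds hK
    (P := fun m W => 1 ≤ m ∧
      IsBowenCoverable T m ε (ENNReal.ofReal (Real.exp (b * m))) (π ⁻¹' W))
    (fun m W W' hW h => ⟨h.1, h.2.mono le_rfl le_rfl (preimage_mono hW)⟩)
    (fun y _ => by
      obtain ⟨m, hm, W, hW, hcover⟩ :=
        exists_mem_nhds_isBowenCoverable_preimage hT hπ (hfib y) hε
      exact ⟨m, W, hW, hm, hcover⟩)
  refine ⟨δ, hδ, M, fun x => ?_⟩
  obtain ⟨m, hmM, hm, hcover⟩ := hM (π x) (mem_range_self x)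
  exact ⟨m, hm, hmM, hcover⟩

-- Follow the orbit of a point of `Z`, using at each stage the fibre cover at its current position;
-- `M` absorbs the last, incomplete stage.
lemma isBowenCoverable_of_isBowenSmall_image (hπTS : Function.Semiconj π T S) {b : ℝ} (hb : 0 ≤ b)
    {ε δ : ℝ} {M : ℕ}
    (hM : ∀ x, ∃ m ≥ (1 : ℕ), m ≤ M ∧ IsBowenCoverable T m ε (ENNReal.ofReal (Real.exp (b * m)))
      (π ⁻¹' Metric.ball (π x) δ)) (n : ℕ) (hZ : IsBowenSmall S n δ (π '' Z)) :
    IsBowenCoverable T n ε (ENNReal.ofReal (Real.exp (b * (n + M)))) Z := by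
  induction n using Nat.strong_induction_on generalizing Z with
  | _ n ih =>
    obtain rfl | ⟨x, hx⟩ := Z.eq_empty_or_nonempty
    · exact isBowenCoverable_empty T n ε _
    obtain rfl | hn := n.eq_zero_or_pos
    · refine isBowenCoverable_zero ?_ T ε Z
      rw [ENNReal.one_le_ofReal]
      exact Real.one_le_exp (by positivity)
    obtain ⟨m, hm₁, hmM, hball⟩ := hM x
    have hZball : Z ⊆ π ⁻¹' Metric.ball (π x) δ := fun z hz =>
      Metric.mem_ball'.2 (hZ _ (mem_image_of_mem π hx) _ (mem_image_of_mem π hz) 0 hn)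
    obtain hnm | hmn := le_or_gt n m
    · refine hball.mono hnm ?_ hZball
      gcongr
      exact_mod_cast hmM.trans (Nat.le_add_left M n)
    · obtain ⟨l, rfl⟩ := Nat.exists_eq_add_of_lt hmn
      rw [add_assoc] at hZ ⊢
      have htail : IsBowenSmall S (l + 1) δ (π '' (T^[m] '' Z)) := by
        rw [(hπTS.iterate_right m).set_image.eq]
        exact hZ.image_iterate
      convert (hball.mono le_rfl le_rfl hZball).concat (ih (l + 1) (by lia) htail) using 1
      rw [ofReal_exp_mul_ofReal_exp]
      push_cast
      ring_nf

/-! ### Lifting covers through the semiconjugacy -/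

lemma exists_finset_preimage_bowenBall_subset (hπTS : Function.Semiconj π T S)
    (hT : Continuous T) (hπ : IsClosedMap π) (hK : IsCompact (range π)) {b : ℝ} (hb : 0 ≤ b)
    (hfib : ∀ y, upcapEntropy T (π ⁻¹' {y}) < ENNReal.ofReal b) {ε : ℝ} (hε : 0 < ε) :
    ∃ δ > 0, ∃ M : ℕ, ∀ (n : ℕ) (y : Y), ∃ F : Finset X,
      F.card ≤ ENNReal.ofReal (Real.exp (b * (n + M))) ∧
        π ⁻¹' bowenBall S y n δ ⊆ ⋃ z ∈ F, bowenBall T z n ε := by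
  obtain ⟨δ, hδ, M, hM⟩ := exists_isBowenCoverable_preimage_ball hT hπ hK hfib hε
  refine ⟨δ / 2, half_pos hδ, M, fun n y => ?_⟩
  have hsmall : IsBowenSmall S n δ (bowenBall S y n (δ / 2)) := by
    simpa only [mul_div_cancel₀ δ two_ne_zero] using isBowenSmall_bowenBall S y n (δ / 2)
  refine (isBowenCoverable_of_isBowenSmall_image hπTS hb hM n ?_)
    |>.exists_finset_subset_biUnion_bowenBall
  exact fun u hu v hv =>
    hsmall u (image_preimage_subset _ _ hu) v (image_preimage_subset _ _ hv)

lemma Mpre_add_le_mul_Mpre_image [Nonempty X] {b c ε δ : ℝ}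
    (hcover : ∀ (n : ℕ) (y : Y), ∃ F : Finset X, F.card ≤ ENNReal.ofReal (Real.exp (b * n + c)) ∧
      π ⁻¹' bowenBall S y n δ ⊆ ⋃ z ∈ F, bowenBall T z n ε) (s : ℝ) (N : ℕ) (E : Set X) :
    Mpre T (s + b) N ε E ≤ ENNReal.ofReal (Real.exp c) * Mpre S s N δ (π '' E) := by
  refine le_mul_Mpre (by simp [Real.exp_pos]) ENNReal.ofReal_ne_top fun I y n hn hE => ?_
  choose F hFcard hF using fun i : I => hcover (n i) (y i)
  have hlift : E ⊆ ⋃ p : Σ i : I, F i, bowenBall T p.2 (n p.1) ε := fun x hx => by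
    obtain ⟨i, hi, hxi⟩ := mem_iUnion₂.1 (hE (mem_image_of_mem π hx))
    obtain ⟨z, hz, hxz⟩ := mem_iUnion₂.1 (hF ⟨i, hi⟩ hxi)
    exact mem_iUnion.2 ⟨⟨⟨i, hi⟩, ⟨z, hz⟩⟩, hxz⟩
  calc Mpre T (s + b) N ε E
      ≤ ∑' p : Σ i : I, F i, ENNReal.ofReal (Real.exp (-(s + b) * n p.1)) :=
        Mpre_le_tsum_of_countable _ _ (fun p => hn _ p.1.2) hlift
    _ = ∑' i : I, (F i).card * ENNReal.ofReal (Real.exp (-(s + b) * n i)) := by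
        simp [ENNReal.tsum_sigma']
    _ ≤ ∑' i : I, ENNReal.ofReal (Real.exp (b * n i + c)) *
          ENNReal.ofReal (Real.exp (-(s + b) * n i)) := by
        gcongr with i
        exact hFcard i
    _ = ∑' i : I, ENNReal.ofReal (Real.exp c) * ENNReal.ofReal (Real.exp (-s * n i)) := by
        refine tsum_congr fun i => ?_
        rw [ofReal_exp_mul_ofReal_exp, ofReal_exp_mul_ofReal_exp]
        congr 2
        ring

lemma Mtop_add_eq_zero [Nonempty X] (hπTS : Function.Semiconj π T S) (hT : Continuous T)
    (hπ : IsClosedMap π) (hK : IsCompact (range π)) {b : ℝ}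
    (hfib : ∀ y, upcapEntropy T (π ⁻¹' {y}) < ENNReal.ofReal b) {s : ℝ} {E : Set X}
    (hs : Mtop S s (π '' E) = 0) : Mtop T (s + b) E = 0 := by
  have hb : 0 < b :=
    ENNReal.ofReal_pos.1 (bot_le.trans_lt (hfib (π (Classical.arbitrary X))))
  refine Mtop_eq_zero_iff.2 fun ε hε N => ?_
  obtain ⟨δ, hδ, M, hM⟩ :=
    exists_finset_preimage_bowenBall_subset hπTS hT hπ hK hb.le hfib hε
  have hle := Mpre_add_le_mul_Mpre_image (by simpa only [mul_add] using hM) s N E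
  rwa [Mtop_eq_zero_iff.1 hs δ hδ N, mul_zero, nonpos_iff_eq_zero] at hle

theorem bowenEntropy_le_add_iSup_upcapEntropy_fiber [Nonempty X] (hπTS : Function.Semiconj π T S)
    (hT : Continuous T) (hπ : IsClosedMap π) (hK : IsCompact (range π)) (E : Set X) :
    bowenEntropy T E ≤ bowenEntropy S (π '' E) + ⨆ y, upcapEntropy T (π ⁻¹' {y}) := by
  refine ENNReal.le_of_forall_pos_le_add fun η hη hfin => ?_
  obtain ⟨hS, hfib⟩ := ENNReal.add_lt_top.1 hfin
  lift bowenEntropy S (π '' E) to ℝ≥0 using hS.ne with h hh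
  lift ⨆ y, upcapEntropy T (π ⁻¹' {y}) to ℝ≥0 using hfib.ne with a ha
  have hη₂ : 0 < η / 2 := half_pos hη
  have hzero : Mtop S (h + η / 2 : ℝ≥0) (π '' E) = 0 := by
    refine Mtop_eq_zero_of_bowenEntropy_lt ?_
    rw [← hh, ENNReal.ofReal_coe_nnreal]
    exact_mod_cast lt_add_of_pos_right h hη₂
  have hfibers (y : Y) : upcapEntropy T (π ⁻¹' {y}) < ENNReal.ofReal (a + η / 2 : ℝ≥0) := by
    refine (le_iSup (fun y => upcapEntropy T (π ⁻¹' {y})) y).trans_lt ?_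
    rw [← ha, ENNReal.ofReal_coe_nnreal]
    exact_mod_cast lt_add_of_pos_right a hη₂
  have hlift := Mtop_add_eq_zero hπTS hT hπ hK hfibers hzero
  refine (bowenEntropy_le_ofReal (hlift ▸ ENNReal.zero_ne_top)).trans_eq ?_
  rw [← NNReal.coe_add, ENNReal.ofReal_coe_nnreal, add_add_add_comm, add_halves]
  push_cast
  rfl

theorem bowenEntropy_image_le_and_le_add_fiber_upcap_general [Nonempty X] (hT : Continuous T)
    (hπ : UniformContinuous π) (hπclosed : IsClosedMap π) (hπrange : IsCompact (range π))
    (hπTS : Function.Semiconj π T S) (E : Set X) :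
    bowenEntropy S (π '' E) ≤ bowenEntropy T E ∧
      bowenEntropy T E ≤ bowenEntropy S (π '' E) + ⨆ y : Y, upcapEntropy T (π ⁻¹' {y}) :=
  ⟨bowenEntropy_image_le hπ hπTS E,
    bowenEntropy_le_add_iSup_upcapEntropy_fiber hπTS hT hπclosed hπrange E⟩

end FactorMaps

/-- **Feng–Huang, Theorem 3.10 (Bowen)**: if `π : (X,T) → (Y,S)` is a factor map between
topological dynamical systems, then for every `E ⊆ X`,
`h^B_top(S, π(E)) ≤ h^B_top(T, E) ≤ h^B_top(S, π(E)) + sup_{y ∈ Y} h^{UC}_top(T, π⁻¹(y))`. -/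
theorem bowenEntropy_image_le_and_le_add_fiber_upcap
    {X Y : Type*} [MetricSpace X] [CompactSpace X] [MetricSpace Y] [CompactSpace Y]
    (T : X → X) (hT : Continuous T) (S : Y → Y) (hS : Continuous S)
    (π : X → Y) (hπcont : Continuous π) (hπsurj : Function.Surjective π)
    (hπcomm : π ∘ T = S ∘ π) (E : Set X) :
    bowenEntropy S (π '' E) ≤ bowenEntropy T E ∧
      bowenEntropy T E ≤ bowenEntropy S (π '' E) + ⨆ y : Y, upcapEntropy T (π ⁻¹' {y}) := by
  rcases isEmpty_or_nonempty X with _ | _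
  · have : IsEmpty Y := hπsurj.isEmpty
    simp [bowenEntropy_of_isEmpty]
  · exact bowenEntropy_image_le_and_le_add_fiber_upcap_general hT
      (CompactSpace.uniformContinuous_of_continuous hπcont) hπcont.isClosedMap
      (isCompact_range hπcont) (Function.semiconj_iff_comp_eq.2 hπcomm) E
end
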